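/- Let N be a natural number, let a_1, ..., a_N be distinct positive real numbers, and let A_1, ..., A_N be positive real numbers. If f ∈ ℂ^N is an eigenvector of the weighted Cauchy matrix, C_{a,A} f = b f for some real b, and f is orthogonal to v_A (i.e., ⟨f, v_A⟩ = 0), then D_a f is an eigenvector equation for the eigenvalue -b: C_{a,A}(D_a f) = -b (D_a f). -/

import Mathlib

open Matrix MeasureTheory
open scoped ComplexOrder

/-- The weighted Cauchy matrix `C_{a,A} = (√(A_j A_k)/(a_j + a_k))_{j,k}`, as a complex matrix. -/
noncomputable def cauchyMatrix {N : ℕ} (a A : Fin N → ℝ) : Matrix (Fin N) (Fin N) ℂ :=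
  Matrix.of fun j k => ((Real.sqrt (A j * A k) / (a j + a k) : ℝ) : ℂ)

/-- The vector `v_A = (√A_1, ..., √A_N)` in `ℂ^N`. -/
noncomputable def vecA {N : ℕ} (A : Fin N → ℝ) : Fin N → ℂ :=
  fun k => ((Real.sqrt (A k) : ℝ) : ℂ)

/-- If `f` is an eigenvector of `C_{a,A}` with eigenvalue `b` and `f ⊥ v_A`,
then `D_a f` satisfies the eigenvector equation for the eigenvalue `-b`. -/
theorem cauchyMatrix_neg_eigen (N : ℕ) (a A : Fin N → ℝ)
    (ha : Function.Injective a) (ha0 : ∀ k, 0 < a k) (hA : ∀ k, 0 < A k)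
    (f : Fin N → ℂ) (b : ℝ)
    (hf : cauchyMatrix a A *ᵥ f = (b : ℂ) • f)
    (horth : f ⬝ᵥ star (vecA A) = 0) :
    cauchyMatrix a A *ᵥ (Matrix.diagonal (fun k => (a k : ℂ)) *ᵥ f) =
      (-b : ℂ) • (Matrix.diagonal (fun k => (a k : ℂ)) *ᵥ f) := by
  -- `C D + D C = v vᵀ`, since `√(A_j A_k) (a_j + a_k) / (a_j + a_k) = √A_j √A_k`. As `f ⊥ v`,
  -- applying this to `f` gives `C (D f) = -D (C f) = -b (D f)`.
  ext j
  have hj := congrFun hf j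
  simp only [cauchyMatrix, mulVec, dotProduct, of_apply, Pi.smul_apply, smul_eq_mul] at hj
  simp only [dotProduct, vecA, Pi.star_apply, RCLike.star_def, Complex.conj_ofReal] at horth
  simp only [cauchyMatrix, mulVec, dotProduct, of_apply, diagonal_apply, ite_mul, zero_mul,
    Finset.sum_ite_eq, Finset.mem_univ, if_true, Pi.smul_apply, smul_eq_mul]
  -- The entrywise form of `C D + D C = v vᵀ`, applied to `f`.
  have key : ∀ k, ((Real.sqrt (A j * A k) / (a j + a k) : ℝ) : ℂ) * ((a k : ℂ) * f k) =
      (Real.sqrt (A j) : ℂ) * (f k * (Real.sqrt (A k) : ℂ)) -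
        (a j : ℂ) * (((Real.sqrt (A j * A k) / (a j + a k) : ℝ) : ℂ) * f k) := by
    intro k
    have hne : (a j : ℂ) + a k ≠ 0 := by
      exact_mod_cast (add_pos (ha0 j) (ha0 k)).ne'
    rw [Real.sqrt_mul (hA j).le]
    push_cast
    field_simp
    ring
  rw [Finset.sum_congr rfl fun k _ => key k, Finset.sum_sub_distrib, ← Finset.mul_sum,
    ← Finset.mul_sum, horth, hj]
  ring
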